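/- Let f : ℝ^d → ℝ be L-smooth, let μ > 0, and let f_μ be its Gaussian smoothing. Then for all x, x̂ ∈ ℝ^d (x̂ being a delayed iterate), ‖∇f_μ(x̂) − ∇f(x)‖² ≤ μ² L² (d + 3)³ / 2 + 2 L² ‖x̂ − x‖². -/

import Mathlib

open MeasureTheory ProbabilityTheory

/-- The standard multivariate Gaussian distribution `N(0, I_d)` on `ℝ^d`. -/
noncomputable def stdGaussian (d : ℕ) : Measure (EuclideanSpace ℝ (Fin d)) :=
  (Measure.pi fun _ : Fin d => gaussianReal 0 1).map
    (MeasurableEquiv.toLp 2 (Fin d → ℝ))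

/-!
Differentiating under the integral sign, `∇f_μ(x̂) - ∇f(x)` is the mean of
`∇f(x̂ + μ u) - ∇f(x)`, whose norm is at most `L ‖(x̂ - x) + μ u‖`. Jensen's inequality bounds the
squared norm of this mean by `L² E‖(x̂ - x) + μ u‖²`, and since `u` is centered with
`E‖u‖² = d`, this equals `L² (‖x̂ - x‖² + μ² d)`, which is below the claimed bound because
`d ≤ (d + 3)³ / 2`.
-/

section LipschitzDerivative

variable {E F : Type*} [NormedAddCommGroup E] [NormedAddCommGroup F]
  {Ω : Type*} [MeasurableSpace Ω] {P : Measure Ω} [IsFiniteMeasure P] {K : NNReal} {X : Ω → E}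

theorem memLp_comp_of_lipschitzWith {p : ENNReal} {g : E → F} (hg : LipschitzWith K g)
    (hX : MemLp X p P) : MemLp (fun ω => g (X ω)) p P := by
  have hg₀ : LipschitzWith K (fun v => g v - g 0) :=
    .of_dist_le_mul fun v w => by simpa only [dist_sub_right] using hg.dist_le_mul v w
  refine ((hg₀.comp_memLp (sub_self _) hX).add (memLp_const (g 0))).ae_eq (.of_forall fun ω => ?_)
  exact sub_add_cancel (g (X ω)) (g 0)

variable [NormedSpace ℝ E] [NormedSpace ℝ F] {f : E → F}

theorem norm_sub_le_of_lipschitzWith_fderiv (hf : Differentiable ℝ f)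
    (hlip : LipschitzWith K (fderiv ℝ f)) (x y : E) :
    ‖f y - f x‖ ≤ (‖fderiv ℝ f x‖ + K * ‖y - x‖) * ‖y - x‖ := by
  refine (convex_closedBall x ‖y - x‖).norm_image_sub_le_of_norm_fderiv_le (𝕜 := ℝ)
    (fun z _ => hf z) (fun z hz => ?_) (by simp) (by simp [dist_eq_norm])
  rw [mem_closedBall_iff_norm] at hz
  calc ‖fderiv ℝ f z‖ ≤ ‖fderiv ℝ f x‖ + ‖fderiv ℝ f z - fderiv ℝ f x‖ := norm_le_insert' _ _
    _ ≤ ‖fderiv ℝ f x‖ + K * ‖y - x‖ := by grw [hlip.norm_sub_le, hz]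

theorem integrable_comp_of_lipschitzWith_fderiv (hf : Differentiable ℝ f)
    (hlip : LipschitzWith K (fderiv ℝ f)) (hX : MemLp X 2 P) :
    Integrable (fun ω => f (X ω)) P := by
  have hbound : Integrable (fun ω => ‖f 0‖ + (‖fderiv ℝ f 0‖ * ‖X ω‖ + K * ‖X ω‖ ^ 2)) P :=
    (integrable_const _).add (((hX.integrable one_le_two).norm.const_mul _).add
      ((hX.integrable_norm_pow two_ne_zero).const_mul _))
  refine hbound.mono' (hf.continuous.comp_aestronglyMeasurable hX.1) (.of_forall fun ω => ?_)
  have hgrowth := norm_sub_le_of_lipschitzWith_fderiv hf hlip 0 (X ω)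
  rw [sub_zero] at hgrowth
  linarith [norm_le_insert' (f (X ω)) (f 0)]

end LipschitzDerivative

theorem norm_integral_sq_le_integral_norm_sq {Ω G : Type*} [MeasurableSpace Ω] {P : Measure Ω}
    [IsProbabilityMeasure P] [NormedAddCommGroup G] [NormedSpace ℝ G] [CompleteSpace G]
    {Y : Ω → G} (hY : MemLp Y 2 P) : ‖∫ ω, Y ω ∂P‖ ^ 2 ≤ ∫ ω, ‖Y ω‖ ^ 2 ∂P :=
  (convexOn_univ_norm.pow (fun _ _ => norm_nonneg _) 2).map_integral_le
    (by fun_prop) isClosed_univ (.of_forall fun _ => Set.mem_univ _)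
    (hY.integrable one_le_two) (hY.integrable_norm_pow two_ne_zero)

section Smoothing

variable {E F : Type*} [NormedAddCommGroup E] [NormedSpace ℝ E] [MeasurableSpace E]
  [NormedAddCommGroup F] [NormedSpace ℝ F]

/-- The smoothing `x ↦ E_u[f (x + μ u)]` of `f` at scale `μ` by a perturbation `u` of law `ν`.
Gaussian smoothing is the case of a standard Gaussian `ν`. -/
noncomputable def smoothing (ν : Measure E) (μ : ℝ) (f : E → F) (x : E) : F :=
  ∫ u, f (x + μ • u) ∂ν

variable {ν : Measure E} {μ : ℝ} {f : E → F} {K : NNReal}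

theorem memLp_add_smul [IsFiniteMeasure ν] {p : ENNReal} (hν : MemLp id p ν) (x : E) :
    MemLp (fun u => x + μ • u) p ν :=
  (memLp_const x).add (hν.const_smul μ)

theorem hasFDerivAt_smoothing [IsFiniteMeasure ν] (hν : MemLp id 2 ν) (hf : Differentiable ℝ f)
    (hlip : LipschitzWith K (fderiv ℝ f)) (x : E) :
    HasFDerivAt (smoothing ν μ f) (∫ u, fderiv ℝ f (x + μ • u) ∂ν) x := by
  have hderiv : Integrable (fun u => fderiv ℝ f (x + μ • u)) ν :=
    (memLp_comp_of_lipschitzWith hlip (memLp_add_smul hν x)).integrable one_le_two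
  refine hasFDerivAt_integral_of_dominated_of_fderiv_le
    (bound := fun u => ‖fderiv ℝ f (x + μ • u)‖ + K)
    (F' := fun y u => fderiv ℝ f (y + μ • u)) (Metric.closedBall_mem_nhds x one_pos)
    (.of_forall fun y => hf.continuous.comp_aestronglyMeasurable (memLp_add_smul hν y).1)
    (integrable_comp_of_lipschitzWith_fderiv hf hlip (memLp_add_smul hν x)) hderiv.1
    (.of_forall fun u y hy => ?_) (hderiv.norm.add (integrable_const _))
    (.of_forall fun u y _ => (hasFDerivAt_comp_add_right (μ • u)).2 (hf (y + μ • u)).hasFDerivAt)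
  rw [mem_closedBall_iff_norm] at hy
  calc ‖fderiv ℝ f (y + μ • u)‖
      ≤ ‖fderiv ℝ f (x + μ • u)‖ + ‖fderiv ℝ f (y + μ • u) - fderiv ℝ f (x + μ • u)‖ :=
        norm_le_insert' _ _
    _ ≤ ‖fderiv ℝ f (x + μ • u)‖ + K := by
        grw [hlip.norm_sub_le, add_sub_add_right_eq_sub, hy, mul_one]

theorem norm_fderiv_smoothing_sub_sq_le [IsProbabilityMeasure ν] [CompleteSpace F]
    (hν : MemLp id 2 ν) (hf : Differentiable ℝ f) (hlip : LipschitzWith K (fderiv ℝ f))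
    (x y : E) :
    ‖fderiv ℝ (smoothing ν μ f) y - fderiv ℝ f x‖ ^ 2
      ≤ K ^ 2 * ∫ u, ‖(y - x) + μ • u‖ ^ 2 ∂ν := by
  have hderiv : MemLp (fun u => fderiv ℝ f (y + μ • u)) 2 ν :=
    memLp_comp_of_lipschitzWith hlip (memLp_add_smul hν y)
  have hdiff : MemLp (fun u => fderiv ℝ f (y + μ • u) - fderiv ℝ f x) 2 ν :=
    hderiv.sub (memLp_const _)
  have hpoint (u : E) : ‖fderiv ℝ f (y + μ • u) - fderiv ℝ f x‖ ^ 2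
      ≤ K ^ 2 * ‖(y - x) + μ • u‖ ^ 2 := by
    grw [hlip.norm_sub_le, mul_pow, add_sub_right_comm]
  calc ‖fderiv ℝ (smoothing ν μ f) y - fderiv ℝ f x‖ ^ 2
      = ‖∫ u, (fderiv ℝ f (y + μ • u) - fderiv ℝ f x) ∂ν‖ ^ 2 := by
        rw [(hasFDerivAt_smoothing hν hf hlip y).fderiv,
          integral_sub (hderiv.integrable one_le_two) (integrable_const _), integral_const,
          probReal_univ, one_smul]
    _ ≤ ∫ u, ‖fderiv ℝ f (y + μ • u) - fderiv ℝ f x‖ ^ 2 ∂ν :=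
        norm_integral_sq_le_integral_norm_sq hdiff
    _ ≤ ∫ u, K ^ 2 * ‖(y - x) + μ • u‖ ^ 2 ∂ν :=
        integral_mono (hdiff.integrable_norm_pow two_ne_zero)
          (((memLp_add_smul hν _).integrable_norm_pow two_ne_zero).const_mul _) hpoint
    _ = K ^ 2 * ∫ u, ‖(y - x) + μ • u‖ ^ 2 ∂ν := integral_const_mul _ _

end Smoothing

section Gradient

variable {𝕜 E : Type*} [RCLike 𝕜] [NormedAddCommGroup E] [InnerProductSpace 𝕜 E] [CompleteSpace E]

theorem norm_gradient_sub_gradient (f g : E → 𝕜) (x y : E) :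
    ‖gradient f x - gradient g y‖ = ‖fderiv 𝕜 f x - fderiv 𝕜 g y‖ := by
  rw [gradient, gradient, ← map_sub, LinearIsometryEquiv.norm_map]

theorem lipschitzWith_fderiv_of_norm_gradient_sub_le {f : E → 𝕜} {L : ℝ}
    (hlip : ∀ x y, ‖gradient f x - gradient f y‖ ≤ L * ‖x - y‖) :
    LipschitzWith (Real.nnabs L) (fderiv 𝕜 f) := by
  refine .of_dist_le_mul fun x y => ?_
  rw [dist_eq_norm, dist_eq_norm, ← norm_gradient_sub_gradient, Real.coe_nnabs]
  grw [hlip, le_abs_self L]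

end Gradient

section CenteredSmoothing

variable {E : Type*} [NormedAddCommGroup E] [InnerProductSpace ℝ E]

theorem integral_norm_add_smul_sq_of_centered [CompleteSpace E] [MeasurableSpace E]
    {ν : Measure E} [IsProbabilityMeasure ν] (hν : MemLp id 2 ν) (hcentered : ∫ u, u ∂ν = 0)
    (μ : ℝ) (a : E) :
    ∫ u, ‖a + μ • u‖ ^ 2 ∂ν = ‖a‖ ^ 2 + μ ^ 2 * ∫ u, ‖u‖ ^ 2 ∂ν := by
  have hid : Integrable (fun u : E => u) ν := hν.integrable one_le_two
  have hinner : Integrable (fun u => 2 * μ * inner ℝ a u) ν := (hid.const_inner a).const_mul _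
  have hlinear : Integrable (fun u => ‖a‖ ^ 2 + 2 * μ * inner ℝ a u) ν :=
    (integrable_const _).add hinner
  have hsq : Integrable (fun u => μ ^ 2 * ‖u‖ ^ 2) ν :=
    (hν.integrable_norm_pow two_ne_zero).const_mul _
  have hexpand (u : E) :
      ‖a + μ • u‖ ^ 2 = ‖a‖ ^ 2 + 2 * μ * inner ℝ a u + μ ^ 2 * ‖u‖ ^ 2 := by
    rw [norm_add_sq_real, inner_smul_right, norm_smul, mul_pow, Real.norm_eq_abs, sq_abs, mul_assoc]
  simp_rw [hexpand]
  rw [integral_add hlinear hsq,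
    integral_add (integrable_const _) hinner, integral_const_mul, integral_const_mul,
    integral_inner hid, hcentered]
  simp

variable [FiniteDimensional ℝ E] [MeasurableSpace E] [BorelSpace E]

theorem integral_norm_sq_stdGaussian :
    ∫ u, ‖u‖ ^ 2 ∂(ProbabilityTheory.stdGaussian E) = Module.finrank ℝ E := by
  let b := stdOrthonormalBasis ℝ E
  have hint (i) : Integrable (fun u => inner ℝ (b i) u ^ 2) (ProbabilityTheory.stdGaussian E) :=
    (IsGaussian.memLp_two_id.const_inner (b i)).integrable_sq
  have hvar (i) : ∫ u, inner ℝ (b i) u ^ 2 ∂(ProbabilityTheory.stdGaussian E) = 1 := by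
    have h := variance_dual_stdGaussian (innerSL ℝ (b i))
    rw [variance_of_integral_eq_zero (by fun_prop) (integral_strongDual_stdGaussian _)] at h
    simpa using h
  simp_rw [← b.sum_sq_inner_right]
  rw [integral_finsetSum _ fun i _ => hint i]
  simp [hvar]

theorem gaussian_smoothing_delayed_gradient_bound_general {f : E → ℝ} {L : ℝ}
    (hdiff : Differentiable ℝ f)
    (hlip : ∀ x y, ‖gradient f x - gradient f y‖ ≤ L * ‖x - y‖) (μ : ℝ) (x xhat : E) :
    ‖gradient (smoothing (ProbabilityTheory.stdGaussian E) μ f) xhat - gradient f x‖ ^ 2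
      ≤ L ^ 2 * (‖xhat - x‖ ^ 2 + μ ^ 2 * Module.finrank ℝ E) := by
  have hbound := norm_fderiv_smoothing_sub_sq_le (μ := μ)
    (IsGaussian.memLp_two_id (μ := ProbabilityTheory.stdGaussian E)) hdiff
    (lipschitzWith_fderiv_of_norm_gradient_sub_le hlip) x xhat
  rwa [← norm_gradient_sub_gradient, Real.coe_nnabs, sq_abs,
    integral_norm_add_smul_sq_of_centered IsGaussian.memLp_two_id integral_id_stdGaussian,
    integral_norm_sq_stdGaussian] at hbound

end CenteredSmoothing

theorem stdGaussian_eq_stdGaussian_euclideanSpace (d : ℕ) :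
    _root_.stdGaussian d = ProbabilityTheory.stdGaussian (EuclideanSpace ℝ (Fin d)) :=
  map_pi_eq_stdGaussian

/-- Delayed-iterate bound for Gaussian smoothing:
`‖∇f_μ(x̂) − ∇f(x)‖² ≤ μ² L² (d + 3)³ / 2 + 2 L² ‖x̂ − x‖²`. -/
theorem gaussian_smoothing_delayed_gradient_bound
    (d : ℕ) (L μ : ℝ) (hμ : 0 < μ)
    (f : EuclideanSpace ℝ (Fin d) → ℝ)
    (hdiff : Differentiable ℝ f)
    (hlip : ∀ x y, ‖gradient f x - gradient f y‖ ≤ L * ‖x - y‖)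
    (fμ : EuclideanSpace ℝ (Fin d) → ℝ)
    (hfμ : ∀ x, fμ x = ∫ u, f (x + μ • u) ∂(stdGaussian d))
    (x xhat : EuclideanSpace ℝ (Fin d)) :
    ‖gradient fμ xhat - gradient f x‖ ^ 2
      ≤ μ ^ 2 * L ^ 2 * ((d : ℝ) + 3) ^ 3 / 2 + 2 * L ^ 2 * ‖xhat - x‖ ^ 2 := by
  have hsmoothing :
      fμ = smoothing (ProbabilityTheory.stdGaussian (EuclideanSpace ℝ (Fin d))) μ f := by
    rw [← stdGaussian_eq_stdGaussian_euclideanSpace]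
    exact funext hfμ
  have hd : (d : ℝ) ≤ ((d : ℝ) + 3) ^ 3 / 2 := by
    have : (0 : ℝ) ≤ d := d.cast_nonneg
    nlinarith [pow_nonneg this 3, sq_nonneg (d : ℝ)]
  calc ‖gradient fμ xhat - gradient f x‖ ^ 2
      ≤ L ^ 2 * (‖xhat - x‖ ^ 2 + μ ^ 2 * d) := by
        simpa [hsmoothing] using
          gaussian_smoothing_delayed_gradient_bound_general hdiff hlip μ x xhat
    _ ≤ L ^ 2 * (2 * ‖xhat - x‖ ^ 2 + μ ^ 2 * (((d : ℝ) + 3) ^ 3 / 2)) := by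
        gcongr
        exact le_mul_of_one_le_left (sq_nonneg _) one_le_two
    _ = μ ^ 2 * L ^ 2 * ((d : ℝ) + 3) ^ 3 / 2 + 2 * L ^ 2 * ‖xhat - x‖ ^ 2 := by ring
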